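/- Let f : C_n → {0,1} and define f̃ : R^n → {−1,1} by f̃(x) = 2 f(sign^n(x)) − 1. Then for all i, j ∈ [n] with i ≠ j, ∫_{R^n} x_i x_j f̃(x) dγ(x) = (2/π) · ∫_{C_n} x_i x_j (2 f(x) − 1) dμ(x), and for i = j, ∫_{R^n} (x_i^2 − 1) f̃(x) dγ(x) = 0. -/

import Mathlib

/-!
Flipping the signs of coordinates preserves `γ`, so under `γ` the sign pattern of `x` is uniform on
the cube and independent of `(|x₁|, …, |xₙ|)`. Hence `∫ G(x) F(sign x) dγ = (∫ F dμ) (∫ G dγ)`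
whenever `G` depends only on the absolute values. For `i ≠ j` write
`xᵢ xⱼ = |xᵢ| |xⱼ| sign(xᵢ) sign(xⱼ)` and use `∫ |xᵢ| |xⱼ| dγ = (√(2 / π))² = 2 / π`; for `i = j`
take `G(x) = xᵢ² - 1`, whose integral vanishes.
-/

open MeasureTheory ProbabilityTheory

noncomputable section

/-- The standard Gaussian measure on `ℝⁿ`. -/
def stdGaussian (n : ℕ) : Measure (Fin n → ℝ) := Measure.pi fun _ => gaussianReal 0 1

/-- Expectation with respect to the uniform measure on the discrete cube `{-1,1}^n`,
modeled as `Fin n → Bool` (`true ↔ 1`, `false ↔ -1`). -/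
def cubeE (n : ℕ) (f : (Fin n → Bool) → ℝ) : ℝ :=
  (∑ σ : Fin n → Bool, f σ) / 2 ^ n

/-- `f` is Boolean, i.e. takes values in `{0,1}`. -/
def BoolValued (n : ℕ) (f : (Fin n → Bool) → ℝ) : Prop := ∀ σ, f σ = 0 ∨ f σ = 1

/-- The `±1` value represented by a cube coordinate. -/
def bval (b : Bool) : ℝ := if b then 1 else -1

/-- `f̃(x) = 2 f(signⁿ(x)) - 1`, where `sign(s) = 1` if `s > 0` and `-1` otherwise. -/
def tilde (n : ℕ) (f : (Fin n → Bool) → ℝ) (x : Fin n → ℝ) : ℝ :=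
  2 * f (fun i => decide (0 < x i)) - 1

open scoped NNRat NNReal BigOperators

lemma bval_decide_pos_mul_abs (t : ℝ) : bval (decide (0 < t)) * |t| = t := by
  rcases lt_or_ge 0 t with h | h
  · simp [bval, h, abs_of_pos h]
  · simp [bval, not_lt.mpr h, abs_of_nonpos h]

lemma abs_bval (b : Bool) : |bval b| = 1 := by
  cases b <;> simp [bval]

/-- In the encoding `true ↔ 1`, `false ↔ -1`, the product of two signs is `==`. -/
lemma decide_pos_bval_mul (b : Bool) {t : ℝ} (ht : t ≠ 0) :
    decide (0 < bval b * t) = (b == decide (0 < t)) := by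
  rcases lt_or_gt_of_ne ht with h | h <;> cases b <;> simp [bval, h, h.le]

section SignPattern

variable {ι : Type*}

/-- The sign vector of `x` as a point of the discrete cube. As in `tilde`, a vanishing coordinate
counts as negative. -/
def signPattern (x : ι → ℝ) : ι → Bool := fun i => decide (0 < x i)

/-- The reflection of `x` that changes the sign of the coordinates where `τ` is `false`. -/
def flipSigns (τ : ι → Bool) (x : ι → ℝ) : ι → ℝ := fun i => bval (τ i) * x i

lemma signPattern_flipSigns (τ : ι → Bool) {x : ι → ℝ} (hx : ∀ i, x i ≠ 0) :
    signPattern (flipSigns τ x) = fun i => τ i == signPattern x i :=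
  funext fun i => decide_pos_bval_mul (τ i) (hx i)

lemma abs_flipSigns (τ : ι → Bool) (x : ι → ℝ) (i : ι) : |flipSigns τ x i| = |x i| := by
  rw [flipSigns, abs_mul, abs_bval, one_mul]

lemma measurable_signPattern : Measurable (signPattern : (ι → ℝ) → ι → Bool) :=
  measurable_pi_lambda _ fun i => measurable_to_bool <| by
    have h : (fun x : ι → ℝ => decide (0 < x i)) ⁻¹' {true} = {x | 0 < x i} := by ext; simp
    exact h ▸ measurableSet_lt measurable_const (measurable_pi_apply i)

lemma expect_beq [Fintype ι] [DecidableEq ι] {M : Type*} [AddCommMonoid M] [Module ℚ≥0 M]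
    (F : (ι → Bool) → M) (s : ι → Bool) :
    𝔼 τ : ι → Bool, F (fun i => τ i == s i) = 𝔼 τ, F τ := by
  have hinv : Function.Involutive fun (τ : ι → Bool) i => τ i == s i := by
    have hbeq : ∀ a b : Bool, ((a == b) == b) = a := by decide
    exact fun τ => funext fun i => hbeq (τ i) (s i)
  exact Fintype.expect_equiv hinv.toPerm _ _ fun _ => rfl

variable {μ : Measure (ι → ℝ)} {G : (ι → ℝ) → ℝ}

lemma integrable_mul_comp_signPattern [Finite ι] (hG : Integrable G μ) (F : (ι → Bool) → ℝ) :
    Integrable (fun x => G x * F (signPattern x)) μ := by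
  have hF : Measurable fun x : ι → ℝ => F (signPattern x) :=
    (measurable_of_countable F).comp measurable_signPattern
  obtain ⟨C, hC⟩ := Set.finite_range (fun σ => ‖F σ‖) |>.bddAbove
  exact hG.mul_bdd hF.aestronglyMeasurable (ae_of_all _ fun x => hC ⟨signPattern x, rfl⟩)

lemma integral_mul_comp_signPattern_beq [Finite ι] {τ : ι → Bool}
    (hτ : MeasurePreserving (flipSigns τ) μ μ) (hμ : ∀ᵐ x ∂μ, ∀ i, x i ≠ 0)
    (hG : Integrable G μ) (hGτ : ∀ x, G (flipSigns τ x) = G x) (F : (ι → Bool) → ℝ) :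
    ∫ x, G x * F (fun i => τ i == signPattern x i) ∂μ = ∫ x, G x * F (signPattern x) ∂μ := by
  have hmeas : AEStronglyMeasurable (fun x => G x * F (signPattern x))
      (μ.map (flipSigns τ)) :=
    hτ.map_eq.symm ▸ (integrable_mul_comp_signPattern hG F).aestronglyMeasurable
  calc ∫ x, G x * F (fun i => τ i == signPattern x i) ∂μ
      = ∫ x, G (flipSigns τ x) * F (signPattern (flipSigns τ x)) ∂μ := by
        refine integral_congr_ae (hμ.mono fun x hx => ?_)
        simp only [hGτ, signPattern_flipSigns τ hx]
    _ = ∫ x, G x * F (signPattern x) ∂μ := by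
        rw [← integral_map hτ.aemeasurable hmeas, hτ.map_eq]

theorem integral_mul_comp_signPattern [Fintype ι] [DecidableEq ι]
    (hflip : ∀ τ, MeasurePreserving (flipSigns τ) μ μ) (hμ : ∀ᵐ x ∂μ, ∀ i, x i ≠ 0)
    (hG : Integrable G μ) (hGflip : ∀ τ x, G (flipSigns τ x) = G x) (F : (ι → Bool) → ℝ) :
    ∫ x, G x * F (signPattern x) ∂μ = (∫ x, G x ∂μ) * 𝔼 σ, F σ := by
  calc ∫ x, G x * F (signPattern x) ∂μ
      = 𝔼 τ : ι → Bool, ∫ x, G x * F (fun i => τ i == signPattern x i) ∂μ := by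
        simp only [integral_mul_comp_signPattern_beq (hflip _) hμ hG (hGflip _),
          Fintype.expect_const]
    _ = ∫ x, 𝔼 τ : ι → Bool, G x * F (fun i => τ i == signPattern x i) ∂μ := by
        simp only [Fintype.expect_eq_sum_div_card]
        rw [integral_div, integral_finsetSum]
        exact fun τ _ =>
          integrable_mul_comp_signPattern hG fun σ => F fun i => τ i == σ i
    _ = (∫ x, G x ∂μ) * 𝔼 σ, F σ := by
        simp only [← Finset.mul_expect, expect_beq, integral_mul_const]

end SignPattern

section Product

variable {ι : Type*} [Fintype ι]

lemma measurePreserving_flipSigns_pi (ν : ι → Measure ℝ) [∀ i, SigmaFinite (ν i)]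
    [∀ i, (ν i).IsNegInvariant] (τ : ι → Bool) :
    MeasurePreserving (flipSigns τ) (Measure.pi ν) (Measure.pi ν) := by
  refine measurePreserving_pi ν ν (f := fun i t => bval (τ i) * t) fun i => ?_
  cases τ i
  · simpa [bval] using Measure.measurePreserving_neg (ν i)
  · simpa [bval] using! MeasurePreserving.id (ν i)

lemma ae_pi_forall_ne (ν : ι → Measure ℝ) [∀ i, SigmaFinite (ν i)]
    [∀ i, NullSingletonClass (ν i)] (a : ι → ℝ) : ∀ᵐ x ∂Measure.pi ν, ∀ i, x i ≠ a i :=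
  ae_all_iff.mpr fun i => Measure.ae_eval_ne (μ := ν) i (a i)

variable {Ω : ι → Type*} [∀ i, MeasurableSpace (Ω i)] {ν : ∀ i, Measure (Ω i)}
  [∀ i, IsProbabilityMeasure (ν i)]

lemma indepFun_eval_pi {i j : ι} (hij : i ≠ j) :
    (fun x : ∀ k, Ω k => x i) ⟂ᵢ[Measure.pi ν] fun x => x j :=
  (iIndepFun_pi (X := fun _ => id) fun _ => aemeasurable_id).indepFun hij

end Product

section Gaussian

instance isNegInvariant_gaussianReal (v : ℝ≥0) : (gaussianReal 0 v).IsNegInvariant where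
  neg_eq_self := by
    simpa [Measure.neg] using! gaussianReal_map_neg (μ := 0) (v := v)

lemma integrable_id_gaussianReal (m : ℝ) (v : ℝ≥0) : Integrable id (gaussianReal m v) :=
  (memLp_id_gaussianReal 1).integrable le_rfl

lemma integrable_sq_gaussianReal (m : ℝ) (v : ℝ≥0) :
    Integrable (fun t => t ^ 2) (gaussianReal m v) :=
  (memLp_id_gaussianReal 2).integrable_sq

lemma integral_sq_gaussianReal (v : ℝ≥0) : ∫ t, t ^ 2 ∂gaussianReal 0 v = v := by
  rw [← variance_of_integral_eq_zero aemeasurable_id' integral_id_gaussianReal,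
    variance_fun_id_gaussianReal]

lemma integral_Ioi_mul_exp_neg_mul_sq {b : ℝ} (hb : 0 < b) :
    ∫ t in Set.Ioi (0 : ℝ), t * Real.exp (-b * t ^ 2) = (2 * b)⁻¹ := by
  have h := integral_rpow_mul_exp_neg_mul_rpow (p := 2) (q := 1) two_pos (by norm_num) hb
  have hexp : -(1 + 1) / 2 = (-1 : ℝ) := by norm_num
  have hone : (1 + 1) / 2 = (1 : ℝ) := by norm_num
  simp only [Real.rpow_one, Real.rpow_two, hexp, hone, Real.rpow_neg_one, Real.Gamma_one] at h
  rw [h]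
  ring

lemma integral_abs_gaussianReal (v : ℝ≥0) :
    ∫ t, |t| ∂gaussianReal 0 v = √(2 * v / Real.pi) := by
  rcases eq_or_ne v 0 with rfl | hv
  · simp
  have hpdf (t : ℝ) : gaussianPDFReal 0 v t • |t| =
      (√(2 * Real.pi * v))⁻¹ * (|t| * Real.exp (-(2 * v : ℝ)⁻¹ * |t| ^ 2)) := by
    rw [gaussianPDFReal, smul_eq_mul, sq_abs, sub_zero, neg_div, div_eq_inv_mul, neg_mul]
    ring
  calc ∫ t, |t| ∂gaussianReal 0 v
      = (√(2 * Real.pi * v))⁻¹ * ∫ t, |t| * Real.exp (-(2 * v : ℝ)⁻¹ * |t| ^ 2) := by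
        simp only [integral_gaussianReal_eq_integral_smul hv, hpdf, integral_const_mul]
    _ = (√(2 * Real.pi * v))⁻¹ * (2 * v) := by
        rw [integral_comp_abs (f := fun t => t * Real.exp (-(2 * v : ℝ)⁻¹ * t ^ 2)),
          integral_Ioi_mul_exp_neg_mul_sq (by positivity)]
        field_simp
    _ = √(2 * v / Real.pi) := by
        have hsq : 2 * v / Real.pi = (2 * v : ℝ) ^ 2 / (2 * Real.pi * v) := by field_simp
        rw [hsq, Real.sqrt_div (by positivity), Real.sqrt_sq (by positivity), inv_mul_eq_div]

end Gaussian

lemma cubeE_eq_expect (n : ℕ) (F : (Fin n → Bool) → ℝ) : cubeE n F = 𝔼 σ, F σ := by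
  simp [cubeE, Fintype.expect_eq_sum_div_card]

section StdGaussian

variable {n : ℕ}

lemma integral_mul_comp_signPattern_stdGaussian {G : (Fin n → ℝ) → ℝ}
    (hG : Integrable G (stdGaussian n)) (hGflip : ∀ τ x, G (flipSigns τ x) = G x)
    (F : (Fin n → Bool) → ℝ) :
    ∫ x, G x * F (signPattern x) ∂stdGaussian n = (∫ x, G x ∂stdGaussian n) * cubeE n F := by
  have := nullSingletonClass_gaussianReal (μ := 0) one_ne_zero
  rw [cubeE_eq_expect]
  exact integral_mul_comp_signPattern (measurePreserving_flipSigns_pi _)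
    (ae_pi_forall_ne _ 0) hG hGflip F

lemma integral_comp_eval_stdGaussian (i : Fin n) {g : ℝ → ℝ}
    (hg : AEStronglyMeasurable g (gaussianReal 0 1)) :
    ∫ x, g (x i) ∂stdGaussian n = ∫ t, g t ∂gaussianReal 0 1 :=
  integral_comp_eval (μ := fun _ => gaussianReal 0 1) hg

variable {i j : Fin n}

lemma integrable_abs_mul_abs_stdGaussian (hij : i ≠ j) :
    Integrable (fun x => |x i| * |x j|) (stdGaussian n) :=
  have hint (k : Fin n) : Integrable (fun x => |x k|) (stdGaussian n) :=
    integrable_comp_eval (integrable_id_gaussianReal 0 1).abs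
  ((indepFun_eval_pi hij).comp measurable_norm measurable_norm).integrable_mul (hint i) (hint j)

lemma integral_abs_mul_abs_stdGaussian (hij : i ≠ j) :
    ∫ x, |x i| * |x j| ∂stdGaussian n = 2 / Real.pi := by
  have hmoment (k : Fin n) : ∫ x, |x k| ∂stdGaussian n = √(2 / Real.pi) := by
    rw [integral_comp_eval_stdGaussian k continuous_abs.aestronglyMeasurable,
      integral_abs_gaussianReal, NNReal.coe_one, mul_one]
  have hindep := (indepFun_eval_pi (ν := fun _ : Fin n => gaussianReal 0 1)
    hij).integral_fun_comp_mul_comp (f := abs) (g := abs)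
      (measurable_pi_apply i).aemeasurable (measurable_pi_apply j).aemeasurable
      continuous_abs.aestronglyMeasurable continuous_abs.aestronglyMeasurable
  calc ∫ x, |x i| * |x j| ∂stdGaussian n
      = (∫ x, |x i| ∂stdGaussian n) * ∫ x, |x j| ∂stdGaussian n := hindep
    _ = 2 / Real.pi := by
        rw [hmoment, hmoment, Real.mul_self_sqrt (by positivity)]

theorem integral_mul_mul_comp_signPattern (hij : i ≠ j) (F : (Fin n → Bool) → ℝ) :
    ∫ x, x i * x j * F (signPattern x) ∂stdGaussian n =
      2 / Real.pi * cubeE n fun σ => bval (σ i) * bval (σ j) * F σ := by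
  have hpolar (x : Fin n → ℝ) : x i * x j * F (signPattern x) = |x i| * |x j| *
      (bval (signPattern x i) * bval (signPattern x j) * F (signPattern x)) := by
    conv_lhs => rw [← bval_decide_pos_mul_abs (x i), ← bval_decide_pos_mul_abs (x j)]
    simp only [signPattern]
    ring
  simp only [hpolar]
  rw [integral_mul_comp_signPattern_stdGaussian (integrable_abs_mul_abs_stdGaussian hij)
    (fun τ x => by simp only [abs_flipSigns])
    (fun σ => bval (σ i) * bval (σ j) * F σ), integral_abs_mul_abs_stdGaussian hij]

theorem integral_sq_sub_one_mul_comp_signPattern (i : Fin n) (F : (Fin n → Bool) → ℝ) :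
    ∫ x, (x i ^ 2 - 1) * F (signPattern x) ∂stdGaussian n = 0 := by
  have hint : Integrable (fun t : ℝ => t ^ 2 - 1) (gaussianReal 0 1) :=
    (integrable_sq_gaussianReal 0 1).sub (integrable_const 1)
  have hzero : ∫ x, (x i ^ 2 - 1) ∂stdGaussian n = 0 :=
    calc ∫ x, (x i ^ 2 - 1) ∂stdGaussian n
        = ∫ t, (t ^ 2 - 1) ∂gaussianReal 0 1 :=
          integral_comp_eval_stdGaussian i hint.aestronglyMeasurable
      _ = 0 := by
        rw [integral_sub (integrable_sq_gaussianReal 0 1) (integrable_const 1),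
          integral_sq_gaussianReal]
        simp
  rw [integral_mul_comp_signPattern_stdGaussian (G := fun x => x i ^ 2 - 1)
    (integrable_comp_eval (μ := fun _ => gaussianReal 0 1) hint)
    (fun τ x => by rw [← sq_abs, abs_flipSigns, sq_abs]) F, hzero, zero_mul]

end StdGaussian

theorem second_hermite_coefficient_of_tilde_general (n : ℕ) (f : (Fin n → Bool) → ℝ) :
    (∀ i j : Fin n, i ≠ j →
      (∫ x, x i * x j * tilde n f x ∂stdGaussian n) =
        (2 / Real.pi) * cubeE n fun σ => bval (σ i) * bval (σ j) * (2 * f σ - 1)) ∧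
    (∀ i : Fin n, (∫ x, (x i ^ 2 - 1) * tilde n f x ∂stdGaussian n) = 0) :=
  ⟨fun _ _ hij => integral_mul_mul_comp_signPattern hij fun σ => 2 * f σ - 1,
    fun i => integral_sq_sub_one_mul_comp_signPattern i fun σ => 2 * f σ - 1⟩

/-- For Boolean `f : Cₙ → {0,1}`: for `i ≠ j`,
`∫ xᵢxⱼ f̃(x) dγ(x) = (2/π) ∫ xᵢxⱼ (2f(x) - 1) dμ(x)`, and for every `i`,
`∫ (xᵢ² - 1) f̃(x) dγ(x) = 0`. -/
theorem second_hermite_coefficient_of_tilde (n : ℕ)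
    (f : (Fin n → Bool) → ℝ) (hf : BoolValued n f) :
    (∀ i j : Fin n, i ≠ j →
      (∫ x, x i * x j * tilde n f x ∂stdGaussian n) =
        (2 / Real.pi) * cubeE n fun σ => bval (σ i) * bval (σ j) * (2 * f σ - 1)) ∧
    (∀ i : Fin n, (∫ x, (x i ^ 2 - 1) * tilde n f x ∂stdGaussian n) = 0) :=
  second_hermite_coefficient_of_tilde_general n f

end
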